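/- arXiv:2305.00235 — 5 statements merged into one kernel-verified Lean document; each statement's English description precedes it below -/
import Mathlib

section
/- In a topological space X, the intersection of two h-open sets is h-open. -/
/-- A subset `B` of a topological space is *h-open* if `B ⊆ interior (B ∪ O)`
for every open set `O` with `O ≠ ∅` and `O ≠ univ`. -/
def HOpen {X : Type*} [TopologicalSpace X] (B : Set X) : Prop :=
  ∀ O : Set X, IsOpen O → O ≠ ∅ → O ≠ Set.univ → B ⊆ interior (B ∪ O)

/-- A subset is *h-closed* if its complement is h-open. -/
def HClosed {X : Type*} [TopologicalSpace X] (B : Set X) : Prop :=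
  HOpen Bᶜ

/-- The *h-interior* of `B`: the union of all h-open sets contained in `B`. -/
def hInterior {X : Type*} [TopologicalSpace X] (B : Set X) : Set X :=
  ⋃₀ {C : Set X | HOpen C ∧ C ⊆ B}

/-- The *h-closure* of `B`: the intersection of all h-closed sets containing `B`. -/
def hClosure {X : Type*} [TopologicalSpace X] (B : Set X) : Set X :=
  ⋂₀ {C : Set X | HClosed C ∧ B ⊆ C}

/-- A function is *h-continuous* if the preimage of every open set is h-open. -/
def HContinuous {X Y : Type*} [TopologicalSpace X] [TopologicalSpace Y] (ψ : X → Y) : Prop :=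
  ∀ O : Set Y, IsOpen O → HOpen (ψ ⁻¹' O)

/-- A function is an *h-open map* if the image of every open set is h-open. -/
def HOpenMap {X Y : Type*} [TopologicalSpace X] [TopologicalSpace Y] (ψ : X → Y) : Prop :=
  ∀ O : Set X, IsOpen O → HOpen (ψ '' O)

/-- A function is *h-irresolute* if the preimage of every h-open set is h-open. -/
def HIrresolute {X Y : Type*} [TopologicalSpace X] [TopologicalSpace Y] (ψ : X → Y) : Prop :=
  ∀ O : Set Y, HOpen O → HOpen (ψ ⁻¹' O)

/-- A function is *h-totally continuous* if the preimage of every h-open set is clopen. -/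
def HTotallyContinuous {X Y : Type*} [TopologicalSpace X] [TopologicalSpace Y] (ψ : X → Y) : Prop :=
  ∀ O : Set Y, HOpen O → IsClopen (ψ ⁻¹' O)

/-- A function is *h-contra continuous* if the preimage of every open set is h-closed. -/
def HContraContinuous {X Y : Type*} [TopologicalSpace X] [TopologicalSpace Y] (ψ : X → Y) : Prop :=
  ∀ O : Set Y, IsOpen O → HClosed (ψ ⁻¹' O)

theorem hOpen_inter {X : Type*} [TopologicalSpace X] (B₁ B₂ : Set X)
    (h₁ : HOpen B₁) (h₂ : HOpen B₂) : HOpen (B₁ ∩ B₂) := by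
  intro O hO hne hnu x hx
  -- Union with `O` distributes over the intersection, and `interior` preserves finite intersections.
  rw [Set.inter_union_distrib_right, interior_inter]
  exact ⟨h₁ O hO hne hnu hx.1, h₂ O hO hne hnu hx.2⟩
end

section
/- In a topological space X, the union of two h-open sets is h-open. -/
theorem hOpen_union {X : Type*} [TopologicalSpace X] (B₁ B₂ : Set X)
    (h₁ : HOpen B₁) (h₂ : HOpen B₂) : HOpen (B₁ ∪ B₂) := by
  intro O hO hne hnu
  -- The interior is monotone, and each `Bᵢ ∪ O` is contained in `(B₁ ∪ B₂) ∪ O`.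
  exact Set.union_subset
    ((h₁ O hO hne hnu).trans
      (interior_mono (Set.union_subset_union_left O Set.subset_union_left)))
    ((h₂ O hO hne hnu).trans
      (interior_mono (Set.union_subset_union_left O Set.subset_union_right)))
end

section
/- In a topological space X, if B₁ is an open set and B₂ is an h-open set, then both B₁ ∩ B₂ and B₁ ∪ B₂ are h-open. -/
theorem open_inter_union_hOpen {X : Type*} [TopologicalSpace X] (B₁ B₂ : Set X)
    (h₁ : IsOpen B₁) (h₂ : HOpen B₂) : HOpen (B₁ ∩ B₂) ∧ HOpen (B₁ ∪ B₂) := by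
  refine ⟨fun O hO hne hnu x hx => ?_, fun O hO hne hnu => ?_⟩
  · -- `B₁ ∩ interior (B₂ ∪ O)` is an open neighbourhood of `x` inside `(B₁ ∩ B₂) ∪ O`.
    refine mem_interior.2 ⟨B₁ ∩ interior (B₂ ∪ O), ?_, h₁.inter isOpen_interior,
      hx.1, h₂ O hO hne hnu hx.2⟩
    rintro y ⟨hy₁, hy⟩
    exact (interior_subset hy).imp_left fun hy₂ => ⟨hy₁, hy₂⟩
  · refine Set.union_subset (interior_maximal ?_ h₁) ((h₂ O hO hne hnu).trans ?_)
    · exact Set.subset_union_left.trans Set.subset_union_left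
    · exact interior_mono (Set.union_subset_union_left O Set.subset_union_right)
end

section
/- Let X and Y be topological spaces and ψ : X → Y a function. Then ψ is h-continuous if and only if for every subset B of X, ψ(Cl_h(B)) ⊆ closure(ψ(B)). -/
theorem HOpen.sUnion {X : Type*} [TopologicalSpace X] {S : Set (Set X)}
    (hS : ∀ C ∈ S, HOpen C) : HOpen (⋃₀ S) := by
  intro O hO hne huniv
  refine Set.sUnion_subset fun C hC => (hS C hC O hO hne huniv).trans ?_
  exact interior_mono (Set.union_subset_union_left O (Set.subset_sUnion_of_mem hC))

theorem hClosed_hClosure {X : Type*} [TopologicalSpace X] (B : Set X) :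
    HClosed (hClosure B) := by
  unfold HClosed hClosure
  rw [Set.compl_sInter]
  apply HOpen.sUnion
  rintro _ ⟨C, ⟨hC, -⟩, rfl⟩
  exact hC

theorem subset_hClosure {X : Type*} [TopologicalSpace X] (B : Set X) : B ⊆ hClosure B :=
  Set.subset_sInter fun _ hC => hC.2

theorem hContinuous_iff_image_hClosure {X Y : Type*} [TopologicalSpace X] [TopologicalSpace Y]
    (ψ : X → Y) : HContinuous ψ ↔ ∀ B : Set X, ψ '' hClosure B ⊆ closure (ψ '' B) := by
  constructor
  · intro h B
    rw [Set.image_subset_iff]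
    exact Set.sInter_subset_of_mem ⟨h _ isClosed_closure.isOpen_compl,
      Set.image_subset_iff.1 subset_closure⟩
  · intro h O hO
    have hsub : hClosure (ψ ⁻¹' Oᶜ) ⊆ ψ ⁻¹' Oᶜ :=
      Set.image_subset_iff.1 ((h _).trans
        (closure_minimal (Set.image_preimage_subset ψ Oᶜ) hO.isClosed_compl))
    have hcl : HClosed (ψ ⁻¹' Oᶜ) := hsub.antisymm (subset_hClosure _) ▸ hClosed_hClosure _
    simpa [HClosed] using hcl
end

section
/- Let X and Y be topological spaces and ψ : X → Y a function. Then ψ is h-continuous if and only if for every subset C of Y, ψ⁻¹(interior(C)) ⊆ Int_h(ψ⁻¹(C)). -/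
/-- A union of h-open sets is h-open: each member `C` lies in `interior (C ∪ O)`, and interior is
monotone. So the h-interior of a set is itself h-open. -/
theorem hOpen_hInterior {X : Type*} [TopologicalSpace X] (B : Set X) : HOpen (hInterior B) := by
  rintro O hO hne hnu x ⟨C, hC, hxC⟩
  exact interior_mono (Set.union_subset_union_left O (Set.subset_sUnion_of_mem hC))
    (hC.1 O hO hne hnu hxC)

theorem hContinuous_iff_preimage_interior {X Y : Type*} [TopologicalSpace X] [TopologicalSpace Y]
    (ψ : X → Y) : HContinuous ψ ↔ ∀ C : Set Y, ψ ⁻¹' interior C ⊆ hInterior (ψ ⁻¹' C) := by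
  refine ⟨fun h C => ?_, fun h O hO => ?_⟩
  · exact Set.subset_sUnion_of_mem ⟨h _ isOpen_interior, Set.preimage_mono interior_subset⟩
  -- For open `O`, the hypothesis says that `ψ ⁻¹' O` equals its own h-interior.
  · have hsub := h O
    rw [hO.interior_eq] at hsub
    have heq : hInterior (ψ ⁻¹' O) = ψ ⁻¹' O :=
      (Set.sUnion_subset fun _ hC => hC.2).antisymm hsub
    exact heq ▸ hOpen_hInterior (ψ ⁻¹' O)
end
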